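/- Let K be a field of characteristic 0, let f and g be nonconstant, relatively prime polynomials in K[t], set A = f² − g², B = 2fg, C = f² + g², and let w ∈ K[t] be a nonzero polynomial. Then (x, y, z) = (2, 1, 1) is a solution of (wA)^x + (wB)^y = (wC)^z, i.e. (wA)² + wB = wC, if and only if w is a constant polynomial and w·(f + g)² = 1 (equivalently, f + g = ±1/√w). -/

import Mathlib

open Polynomial

theorem ne_of_isRelPrime_of_not_isUnit {M : Type*} [CommMonoid M] {a b : M}
    (hab : IsRelPrime a b) (ha : ¬IsUnit a) : a ≠ b := by
  rintro rfl
  exact ha (isRelPrime_self.mp hab)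

section CommRing

variable {R : Type*} [CommRing R]

/- With `A = f² - g²`, `B = 2fg`, `C = f² + g²`, the difference `C - B = (f - g)²` divides
`A² = (f - g)²(f + g)²`. -/
theorem pythagorean_211_sub_eq_mul (f g w : R) :
    (w * (f ^ 2 - g ^ 2)) ^ 2 + w * (2 * f * g) - w * (f ^ 2 + g ^ 2) =
      w * (f - g) ^ 2 * (w * (f + g) ^ 2 - 1) := by
  ring

theorem pythagorean_211_iff [NoZeroDivisors R] {f g w : R} (hfg : f ≠ g) (hw : w ≠ 0) :
    (w * (f ^ 2 - g ^ 2)) ^ 2 + w * (2 * f * g) = w * (f ^ 2 + g ^ 2) ↔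
      w * (f + g) ^ 2 = 1 := by
  have hfactor : w * (f - g) ^ 2 ≠ 0 := mul_ne_zero hw (pow_ne_zero 2 (sub_ne_zero.mpr hfg))
  rw [← sub_eq_zero, pythagorean_211_sub_eq_mul, mul_eq_zero_iff_left hfactor, sub_eq_zero]

theorem jesmanowicz_poly_211_iff_general [NoZeroDivisors R] {f g w : R[X]}
    (hfg : f ≠ g) (hw : w ≠ 0) :
    (w * (f ^ 2 - g ^ 2)) ^ 2 + w * (2 * f * g) = w * (f ^ 2 + g ^ 2) ↔
      (w.natDegree = 0 ∧ w * (f + g) ^ 2 = 1) := by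
  have hconst : w * (f + g) ^ 2 = 1 → w.natDegree = 0 := fun h ↦
    natDegree_eq_zero_of_isUnit (IsUnit.of_mul_eq_one _ h)
  rw [pythagorean_211_iff hfg hw, and_iff_right_of_imp hconst]

end CommRing

theorem jesmanowicz_poly_211_iff
    {K : Type*} [Field K] [CharZero K]
    (f g w : K[X])
    (hf : 0 < f.natDegree) (hg : 0 < g.natDegree)
    (hfg : IsCoprime f g) (hw : w ≠ 0) :
    (w * (f ^ 2 - g ^ 2)) ^ 2 + w * (2 * f * g) = w * (f ^ 2 + g ^ 2) ↔
      (w.natDegree = 0 ∧ w * (f + g) ^ 2 = 1) :=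
  jesmanowicz_poly_211_iff_general
    (ne_of_isRelPrime_of_not_isUnit hfg.isRelPrime (not_isUnit_of_natDegree_pos f hf)) hw
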